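/- arXiv:2301.03456 — 2 statements merged into one kernel-verified Lean document; each statement's English description precedes it below -/
import Mathlib

section
/- Let d₋₁, d₋₂, d₊₁, d₊₂ be real numbers with 0 < d₋₁ ≤ d₋₂ and 0 < d₊₁ ≤ d₊₂. Define H̄₋ = 1/(d₋₁ + d₋₂)² + 1/d₋₁² and H̄₊ = 1/(d₊₁ + d₊₂)² + 1/d₊₁². Then h̄ := 1/(d₋₁²·H̄₋) + 1/(d₊₁²·H̄₊) ≥ 8/5. -/
/-!
Since `1 / (a² (1 / s² + 1 / a²)) = 1 / (1 + (a / s)²)`, each of the two summands depends only on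
the ratio `a / s`. For `s = a + b` with `0 < a ≤ b` this ratio is at most `1 / 2`, so each summand
is at least `1 / (1 + 1 / 4) = 4 / 5`, with equality exactly when `a = b`.
-/

section Field

variable {K : Type*} [Field K]

theorem one_div_sq_mul_one_div_sq_add_one_div_sq {a : K} (ha : a ≠ 0) (s : K) :
    1 / (a ^ 2 * (1 / s ^ 2 + 1 / a ^ 2)) = 1 / (1 + (a / s) ^ 2) := by
  rw [mul_add, mul_one_div_cancel (pow_ne_zero 2 ha), mul_one_div, ← div_pow, add_comm]

variable [LinearOrder K] [IsStrictOrderedRing K]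

theorem div_add_le_half_iff {a b : K} (hs : 0 < a + b) : a / (a + b) ≤ 1 / 2 ↔ a ≤ b := by
  rw [div_le_div_iff₀ hs two_pos, one_mul, mul_two, add_le_add_iff_left]

theorem four_fifths_le_one_div_sq_mul {a b : K} (ha : 0 < a) (hab : a ≤ b) :
    4 / 5 ≤ 1 / (a ^ 2 * (1 / (a + b) ^ 2 + 1 / a ^ 2)) := by
  have hs : 0 < a + b := add_pos_of_pos_of_nonneg ha (ha.le.trans hab)
  have hratio : a / (a + b) ≤ 1 / 2 := (div_add_le_half_iff hs).2 hab
  calc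
    (4 / 5 : K) = 1 / (1 + (1 / 2) ^ 2) := by norm_num
    _ ≤ 1 / (1 + (a / (a + b)) ^ 2) := by gcongr
    _ = 1 / (a ^ 2 * (1 / (a + b) ^ 2 + 1 / a ^ 2)) :=
      (one_div_sq_mul_one_div_sq_add_one_div_sq ha.ne' (a + b)).symm

theorem hbar_ge_eight_fifths_general {dm1 dm2 dp1 dp2 : K}
    (hm1 : 0 < dm1) (hm : dm1 ≤ dm2) (hp1 : 0 < dp1) (hp : dp1 ≤ dp2) :
    1 / (dm1 ^ 2 * (1 / (dm1 + dm2) ^ 2 + 1 / dm1 ^ 2))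
      + 1 / (dp1 ^ 2 * (1 / (dp1 + dp2) ^ 2 + 1 / dp1 ^ 2)) ≥ 8 / 5 :=
  calc
    (8 / 5 : K) = 4 / 5 + 4 / 5 := by norm_num
    _ ≤ _ := add_le_add (four_fifths_le_one_div_sq_mul hm1 hm)
      (four_fifths_le_one_div_sq_mul hp1 hp)

end Field

/-- Lower bound `h̄ ≥ 8/5` on the complexity quantity of the unimodal
lower-bound construction: for `0 < d₋₁ ≤ d₋₂` and `0 < d₊₁ ≤ d₊₂`, with
`H̄₋ = 1/(d₋₁+d₋₂)² + 1/d₋₁²` and `H̄₊ = 1/(d₊₁+d₊₂)² + 1/d₊₁²`, one has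
`1/(d₋₁²·H̄₋) + 1/(d₊₁²·H̄₊) ≥ 8/5`. -/
theorem hbar_ge_eight_fifths (dm1 dm2 dp1 dp2 : ℝ)
    (hm1 : 0 < dm1) (hm : dm1 ≤ dm2) (hp1 : 0 < dp1) (hp : dp1 ≤ dp2) :
    1 / (dm1 ^ 2 * (1 / (dm1 + dm2) ^ 2 + 1 / dm1 ^ 2))
      + 1 / (dp1 ^ 2 * (1 / (dp1 + dp2) ^ 2 + 1 / dp1 ^ 2)) ≥ 8 / 5 := by
  exact hbar_ge_eight_fifths_general hm1 hm hp1 hp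
end

section
/- Let K ≥ 1 and let p : {1, …, K} → ℝ satisfy 1/4 ≤ p_k ≤ 1/2 for all k, p_{k*} = 1/2, and strict unimodality with peak k* (p_1 < p_2 < … < p_{k*} and p_{k*} > p_{k*+1} > … > p_K). Let i ∈ {1, …, K} with i ∉ {k*−1, k*, k*+1}, and define q_k = p_k for k ≠ i and q_i = 1 − p_i. Then q is not unimodal: there is no index m such that q_1 < q_2 < … < q_m and q_m > q_{m+1} > … > q_K. -/
/-!
A strictly unimodal function has no valley: a point strictly between two others takes a value
strictly above that of at least one of them. If arm `i` is neither the peak `k*` nor adjacent to it,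
some arm `j` lies strictly between them. Flipping raises arm `i` to at least the peak value, so
`j` becomes a valley between `i` and `k*`.
-/

open Set

variable {ι α : Type*}

/-- Strict unimodality of `f` on `s` with peak `m`: `f` increases strictly on `s` up to `m` and
decreases strictly from `m` on. The peak is required to lie in `s`. -/
structure StrictUnimodalOn [Preorder ι] [Preorder α] (f : ι → α) (s : Set ι) (m : ι) : Prop where
  peak_mem : m ∈ s
  strictMonoOn : StrictMonoOn f (s ∩ Iic m)
  strictAntiOn : StrictAntiOn f (s ∩ Ici m)

namespace StrictUnimodalOn

variable [LinearOrder ι] [Preorder α] {f : ι → α} {s : Set ι} {m : ι}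

theorem lt_peak (hf : StrictUnimodalOn f s m) {j : ι} (hj : j ∈ s) (hjm : j ≠ m) : f j < f m := by
  rcases hjm.lt_or_gt with h | h
  · exact hf.strictMonoOn ⟨hj, h.le⟩ ⟨hf.peak_mem, le_rfl⟩ h
  · exact hf.strictAntiOn ⟨hf.peak_mem, le_rfl⟩ ⟨hj, h.le⟩ h

theorem lt_or_lt_of_mem_uIoo (hf : StrictUnimodalOn f s m) {a b c : ι}
    (ha : a ∈ s) (hb : b ∈ s) (hc : c ∈ s) (hb_mem : b ∈ uIoo a c) : f a < f b ∨ f c < f b := by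
  wlog hac : a ≤ c generalizing a c
  · exact (this hc ha (uIoo_comm a c ▸ hb_mem) (le_of_not_ge hac)).symm
  obtain ⟨hab, hbc⟩ : b ∈ Ioo a c := uIoo_of_le hac ▸ hb_mem
  rcases le_total m b with hmb | hbm
  · exact .inr (hf.strictAntiOn ⟨hb, hmb⟩ ⟨hc, hmb.trans hbc.le⟩ hbc)
  · exact .inl (hf.strictMonoOn ⟨ha, hab.le.trans hbm⟩ ⟨hb, hbm⟩ hab)

end StrictUnimodalOn

theorem strictUnimodalOn_Icc_iff [LinearOrder ι] [Add ι] [One ι] [SuccAddOrder ι]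
    [IsSuccArchimedean ι] [Preorder α] {f : ι → α} {a b m : ι} :
    StrictUnimodalOn f (Icc a b) m ↔ a ≤ m ∧ m ≤ b ∧
      (∀ k, a ≤ k → k < m → f k < f (k + 1)) ∧ (∀ k, m ≤ k → k < b → f (k + 1) < f k) := by
  constructor
  · rintro ⟨⟨ham, hmb⟩, hmono, hanti⟩
    refine ⟨ham, hmb, fun k hak hkm ↦ ?_, fun k hmk hkb ↦ ?_⟩
    · have hk : k < k + 1 := (Order.add_one_le_iff_of_not_isMax hkm.not_isMax).1 le_rfl
      have hkm' : k + 1 ≤ m := Order.add_one_le_of_lt hkm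
      exact hmono ⟨⟨hak, hkm.le.trans hmb⟩, hkm.le⟩
        ⟨⟨hak.trans hk.le, hkm'.trans hmb⟩, hkm'⟩ hk
    · have hk : k < k + 1 := (Order.add_one_le_iff_of_not_isMax hkb.not_isMax).1 le_rfl
      exact hanti ⟨⟨ham.trans hmk, hkb.le⟩, hmk⟩
        ⟨⟨ham.trans (hmk.trans hk.le), Order.add_one_le_of_lt hkb⟩, hmk.trans hk.le⟩ hk
  · rintro ⟨ham, hmb, hinc, hdec⟩
    refine ⟨⟨ham, hmb⟩, ?_, ?_⟩
    · refine strictMonoOn_of_lt_add_one (ordConnected_Icc.inter ordConnected_Iic) ?_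
      rintro k hk ⟨⟨hak, -⟩, -⟩ ⟨-, hkm⟩
      exact hinc k hak ((Order.add_one_le_iff_of_not_isMax hk).1 hkm)
    · refine strictAntiOn_of_add_one_lt (ordConnected_Icc.inter ordConnected_Ici) ?_
      rintro k hk ⟨-, hmk⟩ ⟨⟨-, hkb⟩, -⟩
      exact hdec k hmk ((Order.add_one_le_iff_of_not_isMax hk).1 hkb)

theorem Icc_inter_uIoo_nonempty {a b i m : ℕ} (hi : i ∈ Icc a b) (hm : m ∈ Icc a b)
    (hfar : i ∉ ({m - 1, m, m + 1} : Set ℕ)) : (Icc a b ∩ uIoo i m).Nonempty := by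
  simp only [mem_insert_iff, mem_singleton_iff, not_or] at hfar
  simp only [mem_Icc] at hi hm
  obtain h | h : i + 1 < m ∨ m + 1 < i := by lia
  · exact ⟨i + 1, ⟨by lia, by lia⟩, mem_uIoo_of_lt i.lt_succ_self h⟩
  · exact ⟨m + 1, ⟨by lia, by lia⟩, mem_uIoo_of_gt m.lt_succ_self h⟩

theorem flip_far_arm_not_unimodal_general [LinearOrder ι] [Preorder α] {s : Set ι} {p q : ι → α}
    {m i : ι} (hp : StrictUnimodalOn p s m) (hi : i ∈ s) (hfar : (s ∩ uIoo i m).Nonempty)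
    (hq : EqOn q p (s \ {i})) (hqi : p m ≤ q i) : ¬ ∃ n, StrictUnimodalOn q s n := by
  rintro ⟨n, hqn⟩
  obtain ⟨j, hjs, hj⟩ := hfar
  have hji : j ≠ i := ne_of_mem_of_not_mem hj left_notMem_uIoo
  have hjm : j ≠ m := ne_of_mem_of_not_mem hj right_notMem_uIoo
  have hmi : m ≠ i := by
    rintro rfl
    simp at hj
  have hqj : q j = p j := hq ⟨hjs, hji⟩
  have hqm : q m = p m := hq ⟨hp.peak_mem, hmi⟩
  have hpj : p j < p m := hp.lt_peak hjs hjm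
  rcases hqn.lt_or_lt_of_mem_uIoo hi hjs hp.peak_mem hj with h | h
  · exact (hqj ▸ h).not_ge (hpj.le.trans hqi)
  · exact (hqm ▸ hqj ▸ h).not_gt hpj

/-- Flipping the mean of an arm `i` outside `{k*−1, k*, k*+1}` destroys
unimodality: if `p` is strictly unimodal on `{1,…,K}` with peak `k*`, values in
`[1/4, 1/2]` and `p_{k*} = 1/2`, and `q` agrees with `p` except `q_i = 1 − p_i`,
then there is no index `m` making `q` strictly unimodal with peak `m`. -/
theorem flip_far_arm_not_unimodal (K : ℕ) (p : ℕ → ℝ) (kstar : ℕ)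
    (hk1 : 1 ≤ kstar) (hkK : kstar ≤ K)
    (hrange : ∀ k, 1 ≤ k → k ≤ K → p k ∈ Set.Icc (1 / 4 : ℝ) (1 / 2))
    (hpeak : p kstar = 1 / 2)
    (hinc : ∀ k, 1 ≤ k → k < kstar → p k < p (k + 1))
    (hdec : ∀ k, kstar ≤ k → k < K → p (k + 1) < p k)
    (i : ℕ) (hi1 : 1 ≤ i) (hiK : i ≤ K)
    (hfar : i ∉ ({kstar - 1, kstar, kstar + 1} : Set ℕ))
    (q : ℕ → ℝ) (hq : ∀ k, k ≠ i → q k = p k) (hqi : q i = 1 - p i) :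
    ¬ ∃ m, 1 ≤ m ∧ m ≤ K ∧
      (∀ k, 1 ≤ k → k < m → q k < q (k + 1)) ∧
      (∀ k, m ≤ k → k < K → q (k + 1) < q k) := by
  simpa only [strictUnimodalOn_Icc_iff] using flip_far_arm_not_unimodal_general
    (strictUnimodalOn_Icc_iff.2 ⟨hk1, hkK, hinc, hdec⟩) ⟨hi1, hiK⟩
    (Icc_inter_uIoo_nonempty ⟨hi1, hiK⟩ ⟨hk1, hkK⟩ hfar) (fun k hk ↦ hq k hk.2)
    (by linarith [(hrange i hi1 hiK).2])
end
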